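/- Let n, m ≥ 1 and let u = (u_1,…,u_m) be an m-tuple of C² functions u_i : ℝⁿ → ℝ solving the prescribed mean curvature system −div(∇u_i/√(1+|∇u_i|²)) = H_i(u) on ℝⁿ for every i. Write x = (x', x_n) ∈ ℝ^{n−1} × ℝ. Assume: (i) for every x_n the function x' ↦ ∑_{i=1}^m (1 + |∇_{x'}u_i|² − √(1+|∇u_i|²))/√(1+|∇u_i|²) − H̃(u) is integrable over ℝ^{n−1}, so that its integral G(x_n) (as a limit over balls B_R(0) ⊂ ℝ^{n−1}) exists and is finite; (ii) differentiation under the integral sign in x_n is justified for each truncated integral over B_R(0); and (iii) for every x_n there is a sequence R_k → ∞ along which ∫_0^{x_n} ∫_{∂B_{R_k}(0)⊂ℝ^{n−1}} ∑_{i=1}^m (∂_{ν_{x'}}u_i)(∂_{x_n}u_i)/√(1+|∇u_i|²) dS(x') dt → 0. Then G(x_n) is constant in x_n: ∫_{ℝ^{n−1}} ( ∑_{i=1}^m (1 + |∇_{x'}u_i|² − √(1+|∇u_i|²))/√(1+|∇u_i|²) − H̃(u) ) dx' ≡ C. -/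

import Mathlib

open MeasureTheory Metric Finset Filter
open scoped RealInnerProductSpace

noncomputable section

/-- Divergence of a vector field on Euclidean space. -/
def vdiv {N : ℕ} (F : EuclideanSpace ℝ (Fin N) → EuclideanSpace ℝ (Fin N))
    (x : EuclideanSpace ℝ (Fin N)) : ℝ :=
  ∑ i, fderiv ℝ F x (EuclideanSpace.single i 1) i

/-- The point `(x', t) ∈ ℝ^{n} × ℝ = ℝ^{n+1}`. -/
def emb {n : ℕ} (x' : EuclideanSpace ℝ (Fin n)) (t : ℝ) : EuclideanSpace ℝ (Fin (n + 1)) :=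
  (EuclideanSpace.equiv (Fin (n + 1)) ℝ).symm (Fin.snoc (fun j => x' j) t)

/-- The integrand of the Hamiltonian for the prescribed mean curvature system:
`∑ᵢ (1 + |∇_{x'}uᵢ|² - √(1+|∇uᵢ|²))/√(1+|∇uᵢ|²) - H̃(u)` evaluated at `(x', t)`. -/
def mcIntegrand {n m : ℕ} (Ht : (Fin m → ℝ) → ℝ)
    (u : Fin m → EuclideanSpace ℝ (Fin (n + 1)) → ℝ)
    (x' : EuclideanSpace ℝ (Fin n)) (t : ℝ) : ℝ :=
  (∑ i, (1 + ‖gradient (fun y => u i (emb y t)) x'‖ ^ 2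
          - Real.sqrt (1 + ‖gradient (u i) (emb x' t)‖ ^ 2))
        / Real.sqrt (1 + ‖gradient (u i) (emb x' t)‖ ^ 2))
    - Ht (fun j => u j (emb x' t))


theorem unif_aux {E : Type*} [MetricSpace E] [MeasurableSpace E] [BorelSpace E]
    [SecondCountableTopology E]
    (S : Set E) (hS : IsCompact S) (μ ν : Measure E) [IsFiniteMeasure μ] [IsFiniteMeasure ν]
    (hμS : μ Sᶜ = 0) (hνS : ν Sᶜ = 0)
    (hμ : ∀ x ∈ S, ∀ y ∈ S, ∀ r, μ (ball x r) = μ (ball y r))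
    (hν : ∀ x ∈ S, ∀ y ∈ S, ∀ r, ν (ball x r) = ν (ball y r))
    (f : E → ℝ) (hf : Continuous f) :
    ν.real Set.univ * ∫ x, f x ∂μ = μ.real Set.univ * ∫ x, f x ∂ν := by
  rcases eq_or_ne ν 0 with rfl | hν0
  · simp
  have hμae : ∀ᵐ x ∂μ, x ∈ S := by rw [ae_iff]; exact hμS
  have hνae : ∀ᵐ x ∂ν, x ∈ S := by rw [ae_iff]; exact hνS
  have hSne : S.Nonempty := by
    by_contra h
    rw [Set.not_nonempty_iff_eq_empty] at h
    subst h
    apply hν0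
    simpa using hνS
  obtain ⟨p, hp⟩ := hSne
  obtain ⟨C, hC⟩ := hS.exists_bound_of_continuousOn hf.continuousOn
  have hfμ : Integrable f μ := by
    refine Integrable.of_bound hf.aestronglyMeasurable C ?_
    filter_upwards [hμae] with x hx using hC x hx
  have hfν : Integrable f ν := by
    refine Integrable.of_bound hf.aestronglyMeasurable C ?_
    filter_upwards [hνae] with x hx using hC x hx
  -- uniform estimate
  have key : ∀ ε > 0, |ν.real Set.univ * ∫ x, f x ∂μ - μ.real Set.univ * ∫ x, f x ∂ν|
      ≤ ε * (μ.real Set.univ * ν.real Set.univ) := by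
    intro ε hε
    have huc := hS.uniformContinuousOn_of_continuous hf.continuousOn
    rw [Metric.uniformContinuousOn_iff] at huc
    obtain ⟨r, hr, hrf⟩ := huc ε hε
    set h : ℝ := ν.real (ball p r) with hh
    set g : ℝ := μ.real (ball p r) with hg
    have hhpos : 0 < h := by
      rw [hh, measureReal_def, ENNReal.toReal_pos_iff]
      refine ⟨?_, measure_lt_top _ _⟩
      rw [pos_iff_ne_zero]
      intro h0
      apply hν0
      have : ν S = 0 := by
        refine hS.measure_zero_of_nhdsWithin ?_
        intro x hx
        refine ⟨ball x r, mem_nhdsWithin_of_mem_nhds (ball_mem_nhds x hr), ?_⟩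
        rw [hν x hx p hp, h0]
      rw [← Measure.measure_univ_eq_zero, ← Set.union_compl_self S]
      exact measure_union_null this hνS
    let K : E × E → ℝ := Set.indicator {z | dist z.1 z.2 < r} 1
    have hKm : MeasurableSet {z : E × E | dist z.1 z.2 < r} :=
      (isOpen_lt continuous_dist continuous_const).measurableSet
    have hK1 : ∀ x ∈ S, ∫ y, K (x, y) ∂ν = h := by
      intro x hx
      have : (fun y => K (x, y)) = (ball x r).indicator 1 := by
        ext y; simp [K, Set.indicator, mem_ball, dist_comm]
      rw [this, integral_indicator_one measurableSet_ball, hh, measureReal_def, measureReal_def,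
        hν x hx p hp]
    have hK2 : ∀ y ∈ S, ∫ x, K (x, y) ∂μ = g := by
      intro x hx
      have : (fun y => K (y, x)) = (ball x r).indicator 1 := by
        ext y; simp [K, Set.indicator, mem_ball]
      rw [this, integral_indicator_one measurableSet_ball, hg, measureReal_def, measureReal_def,
        hμ x hx p hp]
    have hKi : Integrable K (μ.prod ν) := (integrable_const (1:ℝ)).indicator hKm
    have hf1 : Integrable (fun z : E × E => f z.1 * K z) (μ.prod ν) := by
      have : (fun z : E × E => f z.1 * K z) =
        Set.indicator {z | dist z.1 z.2 < r} (fun z => f z.1) := by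
        ext z; simp [K, Set.indicator]
      rw [this]
      exact (hfμ.comp_fst ν).indicator hKm
    have hf2 : Integrable (fun z : E × E => f z.2 * K z) (μ.prod ν) := by
      have : (fun z : E × E => f z.2 * K z) =
        Set.indicator {z | dist z.1 z.2 < r} (fun z => f z.2) := by
        ext z; simp [K, Set.indicator]
      rw [this]
      exact (hfν.comp_snd μ).indicator hKm
    have I1 : ∫ z, f z.1 * K z ∂(μ.prod ν) = h * ∫ x, f x ∂μ := by
      rw [integral_prod _ hf1, ← integral_const_mul]
      refine integral_congr_ae ?_
      filter_upwards [hμae] with x hx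
      rw [integral_const_mul, hK1 x hx, mul_comm]
    have I2 : ∫ z, f z.2 * K z ∂(μ.prod ν) = g * ∫ x, f x ∂ν := by
      rw [integral_prod_symm _ hf2, ← integral_const_mul]
      refine integral_congr_ae ?_
      filter_upwards [hνae] with x hx
      rw [integral_const_mul, hK2 x hx, mul_comm]
    have I3 : ∫ z, K z ∂(μ.prod ν) = h * μ.real Set.univ := by
      rw [integral_prod _ hKi]
      rw [integral_congr_ae (g := fun _ => h)]
      · simp [mul_comm]
      filter_upwards [hμae] with x hx using hK1 x hx
    have I4 : ∫ z, K z ∂(μ.prod ν) = g * ν.real Set.univ := by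
      rw [integral_prod_symm _ hKi]
      rw [integral_congr_ae (g := fun _ => g)]
      · simp [mul_comm]
      filter_upwards [hνae] with x hx using hK2 x hx
    have hae : ∀ᵐ z ∂(μ.prod ν), z.1 ∈ S ∧ z.2 ∈ S := by
      have h1 : ∀ᵐ z ∂(μ.prod ν), z.1 ∈ S := Measure.quasiMeasurePreserving_fst.ae hμae
      have h2 : ∀ᵐ z ∂(μ.prod ν), z.2 ∈ S := Measure.quasiMeasurePreserving_snd.ae hνae
      exact h1.and h2
    have est : |h * ∫ x, f x ∂μ - g * ∫ x, f x ∂ν| ≤ ε * (h * μ.real Set.univ) := by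
      rw [← I1, ← I2, ← I3, ← integral_sub hf1 hf2, ← integral_const_mul]
      refine (abs_integral_le_integral_abs).trans ?_
      refine integral_mono_ae (hf1.sub hf2).abs (hKi.const_mul ε) ?_
      filter_upwards [hae] with z hz
      by_cases hzr : dist z.1 z.2 < r
      · have := hrf z.1 hz.1 z.2 hz.2 hzr
        rw [Real.dist_eq] at this
        simp [K, hzr, this.le]
      · simp [K, hzr]
    have hgn : h * μ.real Set.univ = g * ν.real Set.univ := I3.symm.trans I4
    have e2 : h * (ν.real Set.univ * ∫ x, f x ∂μ - μ.real Set.univ * ∫ x, f x ∂ν)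
      = ν.real Set.univ * (h * ∫ x, f x ∂μ - g * ∫ x, f x ∂ν) := by
      linear_combination (-∫ x, f x ∂ν) * hgn
    refine le_of_mul_le_mul_left ?_ hhpos
    rw [← abs_of_pos hhpos, ← abs_mul, e2, abs_mul, abs_of_pos hhpos,
      abs_of_nonneg measureReal_nonneg]
    calc _ ≤ ν.real Set.univ * (ε * (h * μ.real Set.univ)) :=
          mul_le_mul_of_nonneg_left est measureReal_nonneg
      _ = _ := by ring
  rw [← sub_eq_zero, ← abs_nonpos_iff]
  set M := μ.real Set.univ * ν.real Set.univ
  have hM : 0 ≤ M := mul_nonneg measureReal_nonneg measureReal_nonneg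
  refine le_of_forall_pos_le_add fun δ hδ => ?_
  refine (key (δ / (M + 1)) (by positivity)).trans ?_
  rw [zero_add, div_mul_eq_mul_div, div_le_iff₀ (by positivity)]
  nlinarith

theorem haus_sphere_ne_zero (k : ℕ) :
    (μH[(k : ℝ)] : Measure (EuclideanSpace ℝ (Fin (k+1)))) (sphere 0 1) ≠ 0 := by
  intro h0
  let P : EuclideanSpace ℝ (Fin (k+1)) → (Fin k → ℝ) := fun x j => x j.castSucc
  have hP : LipschitzWith 1 P := by
    refine LipschitzWith.of_dist_le_mul fun x y => ?_
    rw [NNReal.coe_one, one_mul, dist_pi_le_iff dist_nonneg]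
    intro j
    rw [dist_eq_norm, dist_eq_norm]
    simpa using PiLp.norm_apply_le (x - y) j.castSucc
  have h1 := hP.hausdorffMeasure_image_le (d := (k:ℝ)) (by positivity) (sphere 0 1)
  rw [h0, mul_zero] at h1
  have hopen : IsOpen {y : Fin k → ℝ | ∑ j, y j ^ 2 < 1} :=
    isOpen_lt (by fun_prop) continuous_const
  have hpos := hopen.measure_pos (volume : Measure (Fin k → ℝ)) ⟨0, by simp⟩
  have hv : (μH[(k:ℝ)] : Measure (Fin k → ℝ)) = volume := by
    have := hausdorffMeasure_pi_real (ι := Fin k)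
    simpa using this
  rw [hv] at h1
  refine absurd (lt_of_lt_of_le hpos ((measure_mono ?_).trans h1)) (lt_irrefl _)
  intro y hy
  refine ⟨WithLp.toLp 2 (Fin.snoc (α := fun _ => ℝ) y (Real.sqrt (1 - ∑ j, y j ^ 2))), ?_, ?_⟩
  · change ∑ j, y j ^ 2 < 1 at hy
    rw [mem_sphere_zero_iff_norm, EuclideanSpace.norm_eq, Real.sqrt_eq_one, Fin.sum_univ_castSucc]
    simp only [Fin.snoc_castSucc, Fin.snoc_last, Real.norm_eq_abs, sq_abs]
    rw [Real.sq_sqrt (by linarith)]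
    ring
  · ext j
    simp [P]

theorem exists_isom {E : Type*} [NormedAddCommGroup E] [InnerProductSpace ℝ E]
    {x y : E} (h : ‖x‖ = ‖y‖) : ∃ e : E ≃ₗᵢ[ℝ] E, e x = y :=
  ⟨_, Submodule.reflection_sub h⟩

theorem haus_sphere_lt_top (k : ℕ) :
    (μH[(k : ℝ)] : Measure (EuclideanSpace ℝ (Fin (k+1)))) (sphere 0 1) < ⊤ := by
  let q : EuclideanSpace ℝ (Fin (k+1)) := EuclideanSpace.single (Fin.last k) 1
  have hq : ‖q‖ = 1 := by simp [q]
  let L : (Fin k → ℝ) → EuclideanSpace ℝ (Fin (k+1)) := fun y =>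
    WithLp.toLp 2 (Fin.snoc (α := fun _ => ℝ) y 1)
  have hLne : ∀ y, L y ≠ 0 := by
    intro y h
    have := congrArg (fun v : EuclideanSpace ℝ (Fin (k+1)) => v (Fin.last k)) h
    simp [L] at this
  have hL : ContDiff ℝ 1 L := by
    rw [contDiff_euclidean]
    intro i
    refine Fin.lastCases ?_ (fun j => ?_) i
    · simp only [L, Fin.snoc_last]; exact contDiff_const
    · simp only [L, Fin.snoc_castSucc]; fun_prop
  let f : (Fin k → ℝ) → EuclideanSpace ℝ (Fin (k+1)) := fun y => ‖L y‖⁻¹ • L y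
  have hf : ContDiff ℝ 1 f := by
    refine ContDiff.smul (ContDiff.inv (hL.norm ℝ hLne) ?_) hL
    intro y; exact norm_ne_zero_iff.2 (hLne y)
  obtain ⟨K, t, ht, hKt⟩ := hf.locallyLipschitz (0 : Fin k → ℝ)
  have hv : (μH[(k:ℝ)] : Measure (Fin k → ℝ)) = volume := by
    have := hausdorffMeasure_pi_real (ι := Fin k)
    simpa using this
  -- shrink t
  have hfin : (μH[(k : ℝ)] : Measure (EuclideanSpace ℝ (Fin (k+1)))) (f '' (t ∩ ball 0 1)) < ⊤ := by
    refine lt_of_le_of_lt ((hKt.mono Set.inter_subset_left).hausdorffMeasure_image_le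
      (by positivity)) ?_
    rw [hv]
    refine ENNReal.mul_lt_top (ENNReal.rpow_lt_top_of_nonneg (by positivity) ENNReal.coe_ne_top) ?_
    exact lt_of_le_of_lt (measure_mono Set.inter_subset_right) measure_ball_lt_top
  let G : EuclideanSpace ℝ (Fin (k+1)) → (Fin k → ℝ) := fun x j => (x (Fin.last k))⁻¹ * x j.castSucc
  have hG : ContinuousAt G q := by
    refine continuousAt_pi.2 fun j => ?_
    refine ContinuousAt.mul (ContinuousAt.inv₀ (by fun_prop) ?_) (by fun_prop)
    simp [q]
  have hGq : G q = 0 := by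
    ext j
    simp [G, q, Fin.ext_iff, j.2.ne]
  have hW : {x : EuclideanSpace ℝ (Fin (k+1)) | G x ∈ t ∩ ball 0 1 ∧ 0 < x (Fin.last k)} ∈ nhds q := by
    refine inter_mem (hG ?_) ?_
    · rw [hGq]; exact inter_mem ht (ball_mem_nhds _ one_pos)
    · have ho : IsOpen {x : EuclideanSpace ℝ (Fin (k+1)) | 0 < x (Fin.last k)} :=
        isOpen_lt continuous_const (by fun_prop)
      refine ho.mem_nhds ?_
      simp [q]
  set W := {x : EuclideanSpace ℝ (Fin (k+1)) | G x ∈ t ∩ ball 0 1 ∧ 0 < x (Fin.last k)} with hWdef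
  have hsub : W ∩ sphere 0 1 ⊆ f '' (t ∩ ball 0 1) := by
    rintro x ⟨⟨hx1, hx2⟩, hx3⟩
    refine ⟨G x, hx1, ?_⟩
    have hLx : L (G x) = (x (Fin.last k))⁻¹ • x := by
      ext i
      refine Fin.lastCases ?_ (fun j => ?_) i
      · simp [L, hx2.ne']
      · simp [L, G]
    rw [mem_sphere_zero_iff_norm] at hx3
    simp only [f]
    rw [hLx, norm_smul, hx3, smul_smul]
    simp [abs_of_pos hx2, hx2.ne']
  refine (isCompact_sphere _ _).measure_lt_top_of_nhdsWithin ?_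
  intro x hx
  rw [mem_sphere_zero_iff_norm] at hx
  obtain ⟨e, he⟩ := exists_isom (hx.trans hq.symm)
  refine ⟨e ⁻¹' (W ∩ sphere 0 1), ?_, ?_⟩
  · have h1 : e ⁻¹' W ∈ nhds x := e.continuous.continuousAt (by rw [he]; exact hW)
    have h2 : e ⁻¹' (sphere 0 1) = sphere 0 1 := by
      ext z; simp
    rw [Set.preimage_inter, h2]
    exact inter_mem (mem_nhdsWithin_of_mem_nhds h1) self_mem_nhdsWithin
  · have : (μH[(k : ℝ)] : Measure (EuclideanSpace ℝ (Fin (k+1)))) (e ⁻¹' (W ∩ sphere 0 1)) =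
      μH[(k : ℝ)] (W ∩ sphere 0 1) := by
      exact e.toIsometryEquiv.hausdorffMeasure_preimage _ _
    rw [this]
    exact lt_of_le_of_lt (measure_mono hsub) hfin

open scoped Pointwise

abbrev Eu (k : ℕ) := EuclideanSpace ℝ (Fin k)

theorem cone_ball_eq {E : Type*} [NormedAddCommGroup E] [InnerProductSpace ℝ E]
    [FiniteDimensional ℝ E] [MeasurableSpace E] [BorelSpace E]
    (R : ℝ) (x y : E) (hxy : ‖x‖ = ‖y‖) (r : ℝ) :
    (volume : Measure E).toSphere ((fun θ : sphere (0:E) 1 => R • (θ : E)) ⁻¹' ball x r)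
    = (volume : Measure E).toSphere ((fun θ : sphere (0:E) 1 => R • (θ : E)) ⁻¹' ball y r) := by
  have hc : Continuous (fun θ : sphere (0:E) 1 => R • (θ : E)) := by fun_prop
  rw [Measure.toSphere_apply' _ (hc.measurable measurableSet_ball),
    Measure.toSphere_apply' _ (hc.measurable measurableSet_ball)]
  congr 1
  obtain ⟨e, he⟩ := exists_isom hxy
  have hset : Set.Ioo (0:ℝ) 1 • (Subtype.val '' ((fun θ : sphere (0:E) 1 => R • (θ : E)) ⁻¹' ball x r))
     = e ⁻¹' (Set.Ioo (0:ℝ) 1 • (Subtype.val '' ((fun θ : sphere (0:E) 1 => R • (θ : E)) ⁻¹' ball y r))) := by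
    ext z
    simp only [Set.mem_smul, Set.mem_preimage, Set.mem_image, mem_ball]
    constructor
    · rintro ⟨s, hs, w, ⟨θ, hθ, rfl⟩, rfl⟩
      have hθ1 : ‖(θ:E)‖ = 1 := by simp
      refine ⟨s, hs, e θ, ⟨⟨e θ, by simp [hθ1]⟩, ?_, rfl⟩, by simp⟩
      simp only
      rw [← he, ← map_smul, e.dist_map]
      exact hθ
    · rintro ⟨s, hs, w, ⟨θ, hθ, rfl⟩, hz⟩
      have hθ1 : ‖(θ:E)‖ = 1 := by simp
      refine ⟨s, hs, e.symm θ, ⟨⟨e.symm θ, by simp [hθ1]⟩, ?_, rfl⟩, ?_⟩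
      · simp only
        rw [← e.dist_map, he, map_smul, e.apply_symm_apply]
        exact hθ
      · apply e.injective
        rw [map_smul, e.apply_symm_apply, hz]
  rw [hset]
  exact (e.measurePreserving.measure_preimage_emb
    e.toHomeomorph.measurableEmbedding _)

theorem sphere_int (k : ℕ) (R : ℝ) (hR : 0 < R) (f : Eu (k+1) → ℝ)
    (hf : Continuous f) :
    R ^ k * ∫ θ : sphere (0 : Eu (k+1)) 1, f (R • (θ : Eu (k+1)))
        ∂(volume : Measure (Eu (k+1))).toSphere
    = ((volume : Measure (Eu (k+1))).toSphere.real Set.univ /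
        (μH[(k : ℝ)] : Measure (Eu (k+1))).real (sphere 0 1)) *
      ∫ x in sphere 0 R, f x ∂μH[(k : ℝ)] := by
  have hsph : (μH[(k : ℝ)] : Measure (Eu (k+1))) (sphere 0 R)
      = ENNReal.ofReal (R ^ k) * (μH[(k : ℝ)] : Measure (Eu (k+1))) (sphere 0 1) := by
    have h1 : sphere (0:(Eu (k+1))) R = R • sphere (0:(Eu (k+1))) 1 := by
      rw [smul_sphere' hR.ne']; simp [abs_of_pos hR]
    rw [h1, Measure.hausdorffMeasure_smul₀ (by positivity) hR.ne', ENNReal.smul_def, smul_eq_mul]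
    congr 1
    rw [ENNReal.ofReal, NNReal.rpow_natCast]
    congr 1
    ext
    simp [abs_of_pos hR, hR.le]
  have hfin := haus_sphere_lt_top k
  have hne := haus_sphere_ne_zero k
  have hlt : (μH[(k : ℝ)] : Measure (Eu (k+1))) (sphere 0 R) < ⊤ := by
    rw [hsph]; exact ENNReal.mul_lt_top ENNReal.ofReal_lt_top hfin
  have hc : Continuous (fun θ : sphere (0:(Eu (k+1))) 1 => R • (θ : (Eu (k+1)))) := by fun_prop
  let μ : Measure (Eu (k+1)) := (μH[(k : ℝ)] : Measure (Eu (k+1))).restrict (sphere 0 R)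
  let ν : Measure (Eu (k+1)) := (volume : Measure (Eu (k+1))).toSphere.map (fun θ : sphere (0:(Eu (k+1))) 1 => R • (θ : (Eu (k+1))))
  have : IsFiniteMeasure μ := ⟨by simpa [μ] using hlt⟩
  have : IsFiniteMeasure ν := Measure.isFiniteMeasure_map _ _
  have key := unif_aux (sphere (0:(Eu (k+1))) R) (isCompact_sphere _ _) μ ν ?_ ?_ ?_ ?_ f hf
  · have e1 : ∫ x, f x ∂ν = ∫ θ : sphere (0 : (Eu (k+1))) 1, f (R • (θ : (Eu (k+1)))) ∂(volume : Measure (Eu (k+1))).toSphere :=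
      integral_map hc.measurable.aemeasurable hf.aestronglyMeasurable
    have e2 : ν.real Set.univ = (volume : Measure (Eu (k+1))).toSphere.real Set.univ := by
      simp only [ν, measureReal_def]
      rw [Measure.map_apply hc.measurable MeasurableSet.univ, Set.preimage_univ]
    have e3 : μ.real Set.univ = R ^ k * (μH[(k : ℝ)] : Measure (Eu (k+1))).real (sphere 0 1) := by
      simp only [μ, measureReal_def]
      rw [Measure.restrict_apply_univ, hsph, ENNReal.toReal_mul, ENNReal.toReal_ofReal (by positivity)]
    rw [e1, e2, e3] at key
    have hpos : 0 < (μH[(k : ℝ)] : Measure (Eu (k+1))).real (sphere 0 1) :=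
      ENNReal.toReal_pos hne hfin.ne
    rw [div_mul_eq_mul_div, eq_div_iff hpos.ne', key]
    ring
  · simp only [μ]
    rw [Measure.restrict_apply (isClosed_sphere.measurableSet.compl)]
    simp
  · simp only [ν]
    rw [Measure.map_apply hc.measurable (isClosed_sphere.measurableSet.compl)]
    convert measure_empty (μ := (volume : Measure (Eu (k+1))).toSphere)
    ext θ
    have hθ1 : ‖(θ:(Eu (k+1)))‖ = 1 := by simp
    simp [norm_smul, hθ1, abs_of_pos hR]
  · intro x hx y hy r
    rw [mem_sphere_zero_iff_norm] at hx hy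
    obtain ⟨e, he⟩ := exists_isom (hx.trans hy.symm)
    simp only [μ]
    rw [Measure.restrict_apply measurableSet_ball, Measure.restrict_apply measurableSet_ball]
    rw [← e.toIsometryEquiv.hausdorffMeasure_preimage (k:ℝ) (ball y r ∩ sphere 0 R)]
    congr 1
    ext z
    have h3 : ‖e.toIsometryEquiv z‖ = ‖z‖ := e.norm_map z
    have h4 : dist (e.toIsometryEquiv z) (e x) = dist z x := e.dist_map z x
    simp only [Set.mem_inter_iff, Set.mem_preimage, mem_ball, mem_sphere_zero_iff_norm, ← he, h3, h4]
  · intro x hx y hy r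
    rw [mem_sphere_zero_iff_norm] at hx hy
    simp only [ν]
    rw [Measure.map_apply hc.measurable measurableSet_ball,
      Measure.map_apply hc.measurable measurableSet_ball]
    exact cone_ball_eq R x y (hx.trans hy.symm) r

theorem polar_int (k : ℕ) (f : Eu (k+1) → ℝ) (hf : Integrable f) :
    ∫ x, f x = ∫ r in Set.Ioi (0:ℝ), r ^ k *
      ∫ θ : sphere (0 : Eu (k+1)) 1, f (r • (θ : Eu (k+1)))
        ∂(volume : Measure (Eu (k+1))).toSphere := by
  have hdim : Module.finrank ℝ (Eu (k+1)) - 1 = k := by simp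
  have hmp := (volume : Measure (Eu (k+1))).measurePreserving_homeomorphUnitSphereProd
  rw [hdim] at hmp
  have hmeq : ∀ z : ({0}ᶜ : Set (Eu (k+1))), f z = (fun p : sphere (0:(Eu (k+1))) 1 × Set.Ioi (0:ℝ) =>
      f ((p.2 : ℝ) • (p.1 : (Eu (k+1))))) (homeomorphUnitSphereProd (Eu (k+1)) z) := by
    intro z
    have hz : ‖(z:(Eu (k+1)))‖ ≠ 0 := norm_ne_zero_iff.2 z.2
    simp [smul_smul, hz]
  have hint : Integrable (fun p : sphere (0:(Eu (k+1))) 1 × Set.Ioi (0:ℝ) =>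
      f ((p.2 : ℝ) • (p.1 : (Eu (k+1))))) ((volume : Measure (Eu (k+1))).toSphere.prod (Measure.volumeIoiPow k)) := by
    rw [← hmp.integrable_comp_emb (Homeomorph.measurableEmbedding _)]
    have h2 : IntegrableOn f ({0}ᶜ : Set (Eu (k+1))) := hf.integrableOn
    rw [integrableOn_iff_comap_subtypeVal (measurableSet_singleton _).compl] at h2
    refine h2.congr (Eventually.of_forall fun z => ?_)
    exact hmeq z
  calc ∫ x, f x = ∫ x : ({(0)}ᶜ : Set (Eu (k+1))), f x.1 ∂(Measure.comap Subtype.val (volume : Measure (Eu (k+1)))) := by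
        rw [integral_subtype_comap (measurableSet_singleton _).compl f,
          restrict_compl_singleton]
    _ = ∫ p, f ((p.2 : ℝ) • (p.1 : (Eu (k+1)))) ∂((volume : Measure (Eu (k+1))).toSphere.prod (Measure.volumeIoiPow k)) := by
        rw [← hmp.integral_comp (Homeomorph.measurableEmbedding _)]
        exact integral_congr_ae (Eventually.of_forall hmeq)
    _ = ∫ r : Set.Ioi (0:ℝ), ∫ θ : sphere (0:(Eu (k+1))) 1, f ((r:ℝ) • (θ:(Eu (k+1)))) ∂(volume : Measure (Eu (k+1))).toSphere
          ∂(Measure.volumeIoiPow k) := integral_prod_symm _ hint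
    _ = _ := by
      simp only [Measure.volumeIoiPow, ENNReal.ofReal]
      rw [integral_withDensity_eq_integral_smul,
        integral_subtype_comap measurableSet_Ioi fun a ↦ Real.toNNReal (a ^ k) •
          ∫ θ : sphere (0:(Eu (k+1))) 1, f (a • (θ:(Eu (k+1)))) ∂(volume : Measure (Eu (k+1))).toSphere,
        setIntegral_congr_fun measurableSet_Ioi fun x hx ↦ ?_]
      · rw [NNReal.smul_def, Real.coe_toNNReal _ (pow_nonneg hx.out.le _), smul_eq_mul]
      · exact (measurable_subtype_coe.pow_const _).real_toNNReal

theorem continuous_sphere_int (k : ℕ) (g : Eu (k+1) → Eu (k+1) → ℝ)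
    (hg : Continuous (Function.uncurry g)) :
    Continuous (fun r : ℝ => ∫ θ : sphere (0 : Eu (k+1)) 1, g (r • (θ : Eu (k+1))) θ
        ∂(volume : Measure (Eu (k+1))).toSphere) := by
  have h := continuous_parametric_integral_of_continuous
    (μ := (volume : Measure (Eu (k+1))).toSphere)
    (f := fun (r : ℝ) (θ : sphere (0 : Eu (k+1)) 1) => g (r • (θ : Eu (k+1))) θ)
    (by
      have : Continuous (fun p : ℝ × sphere (0 : Eu (k+1)) 1 =>
        ((p.1 • (p.2 : Eu (k+1)), (p.2 : Eu (k+1))) : Eu (k+1) × Eu (k+1))) := by fun_prop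
      exact hg.comp this) (isCompact_univ)
  simpa using h

theorem vdiv_continuous {N : ℕ} (F : Eu N → Eu N) (hF : ContDiff ℝ 1 F) :
    Continuous (vdiv F) := by
  have h1 : Continuous (fderiv ℝ F) := hF.continuous_fderiv (by simp)
  unfold vdiv
  fun_prop

theorem vdiv_ball_aux (k : ℕ) (F : Eu (k+1) → Eu (k+1)) (hF : ContDiff ℝ 1 F) (R : ℝ) (hR : 0 < R) :
    ∫ x in ball (0 : Eu (k+1)) R, vdiv F x =
      R ^ k * ∫ θ : sphere (0 : Eu (k+1)) 1, ⟪F (R • (θ : Eu (k+1))), (θ : Eu (k+1))⟫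
        ∂(volume : Measure (Eu (k+1))).toSphere := by
  have hD := vdiv_continuous F hF
  have hFc := hF.continuous
  let d : ℝ → ℝ := fun r => ∫ θ : sphere (0 : Eu (k+1)) 1, vdiv F (r • (θ : Eu (k+1)))
        ∂(volume : Measure (Eu (k+1))).toSphere
  have hd : Continuous d := continuous_sphere_int k (fun x _ => vdiv F x) (by
    exact hD.comp continuous_fst)
  let A : ℝ → ℝ := fun r => ∫ s in (0:ℝ)..r, s ^ k * d s
  have hA' : ∀ r, HasDerivAt A (r ^ k * d r) r := fun r =>
    (by fun_prop : Continuous fun s => s ^ k * d s).integral_hasStrictDerivAt 0 r |>.hasDerivAt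
  have hAc : Continuous A := continuous_iff_continuousAt.2 fun r => (hA' r).continuousAt
  let b : ℝ → ℝ := fun r => ∫ θ : sphere (0 : Eu (k+1)) 1, ⟪F (r • (θ : Eu (k+1))), (θ : Eu (k+1))⟫
        ∂(volume : Measure (Eu (k+1))).toSphere
  have hb : Continuous b := continuous_sphere_int k (fun x θ => ⟪F x, θ⟫) (by
    unfold Function.uncurry; fun_prop)
  let B : ℝ → ℝ := fun r => r ^ k * b r
  have hBc : Continuous B := by fun_prop
  have hAeq : ∀ r, 0 < r → ∫ x in ball (0 : Eu (k+1)) r, vdiv F x = A r := by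
    intro r hr
    rw [← integral_indicator measurableSet_ball, polar_int]
    · have : ∀ s ∈ Set.Ioi (0:ℝ), s ^ k * ∫ θ : sphere (0 : Eu (k+1)) 1,
          (ball (0 : Eu (k+1)) r).indicator (fun x => vdiv F x) (s • (θ : Eu (k+1)))
          ∂(volume : Measure (Eu (k+1))).toSphere =
          (Set.Iio r).indicator (fun s => s ^ k * d s) s := by
        intro s hs
        have hmem : ∀ θ : sphere (0 : Eu (k+1)) 1, s • (θ : Eu (k+1)) ∈ ball (0 : Eu (k+1)) r ↔ s < r := by
          intro θ
          simp [norm_smul, abs_of_pos hs.out]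
        by_cases hsr : s < r
        · simp [Set.indicator, hmem, hsr, d]
        · simp [Set.indicator, hmem, hsr]
      rw [setIntegral_congr_fun measurableSet_Ioi this, setIntegral_indicator measurableSet_Iio]
      simp only [A]
      rw [intervalIntegral.integral_of_le hr.le, Set.Ioi_inter_Iio, integral_Ioc_eq_integral_Ioo]
    · rw [integrable_indicator_iff measurableSet_ball]
      exact (hD.continuousOn.integrableOn_compact (isCompact_closedBall 0 r)).mono_set
        ball_subset_closedBall
  have key : ∀ ψ : ℝ → ℝ, ContDiff ℝ (⊤ : ℕ∞) ψ → HasCompactSupport ψ → tsupport ψ ⊆ Set.Ioi 0 →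
      ∫ r, ψ r • (A r - B r) = 0 := by
    intro ψ hψ hψc hψs
    have hψcont : Continuous ψ := hψ.continuous
    obtain ⟨ε, hε, hψε⟩ : ∃ ε > 0, ∀ r < ε, ψ r = 0 := by
      have h0 : (0:ℝ) ∉ tsupport ψ := fun h => lt_irrefl _ (hψs h).out
      have : (tsupport ψ)ᶜ ∈ nhds (0:ℝ) := (isClosed_tsupport ψ).isOpen_compl.mem_nhds h0
      obtain ⟨ε, hε, hb⟩ := Metric.mem_nhds_iff.1 this
      refine ⟨ε, hε, fun r hr => ?_⟩
      by_cases hr0 : 0 < r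
      · apply image_eq_zero_of_notMem_tsupport
        apply hb
        simpa [abs_of_pos hr0] using hr
      · apply image_eq_zero_of_notMem_tsupport
        exact fun h => hr0 (hψs h).out
    obtain ⟨M, hM, hψM⟩ : ∃ M > 0, ∀ r ≥ M, ψ r = 0 := by
      obtain ⟨M, hM⟩ := hψc.isCompact.isBounded.subset_closedBall (0:ℝ)
      refine ⟨|M| + 1, by positivity, fun r hr => ?_⟩
      apply image_eq_zero_of_notMem_tsupport
      intro h
      have := hM h
      rw [mem_closedBall_zero_iff, Real.norm_eq_abs] at this
      linarith [le_abs_self r, le_abs_self M]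
    let φ : ℝ → ℝ := fun r => -∫ s in M..r, ψ s
    have hφ' : ∀ r, HasDerivAt φ (-ψ r) r := fun r =>
      (hψcont.integral_hasStrictDerivAt M r).hasDerivAt.neg
    have hφc : Continuous φ := continuous_iff_continuousAt.2 fun r => (hφ' r).continuousAt
    have hφM : ∀ r ≥ M, φ r = 0 := by
      intro r hr
      simp only [φ, neg_eq_zero]
      rw [intervalIntegral.integral_congr (g := fun _ => 0)]
      · simp
      · intro s hs
        rw [Set.uIcc_of_le hr] at hs
        exact hψM s hs.1
    have hφε : ∀ r < ε, φ r = φ 0 := by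
      intro r hr
      have : φ r - φ 0 = -∫ s in (0:ℝ)..r, ψ s := by
        simp only [φ]
        rw [← intervalIntegral.integral_add_adjacent_intervals (a := M) (b := 0) (c := r)
          (hψcont.intervalIntegrable _ _) (hψcont.intervalIntegrable _ _)]
        ring
      rw [← sub_eq_zero, this, neg_eq_zero, intervalIntegral.integral_congr (g := fun _ => 0)]
      · simp
      · intro s hs
        refine hψε s (lt_of_le_of_lt hs.2 ?_)
        simp [hr, hε]
    let χ : ℝ → ℝ := fun r => ψ r * (max r ε)⁻¹
    have hχ : Continuous χ := by
      refine hψcont.mul (Continuous.inv₀ (by fun_prop) ?_)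
      intro r
      exact (lt_of_lt_of_le hε (le_max_right _ _)).ne'
    have hχ' : ∀ r, χ r * r = ψ r := by
      intro r
      by_cases hr : r < ε
      · simp [χ, hψε r hr]
      · push Not at hr
        have : r ≠ 0 := by linarith
        simp only [χ]
        rw [max_eq_left hr]
        field_simp
    have hχM : ∀ r ≥ M, χ r = 0 := fun r hr => by simp [χ, hψM r hr]
    let η : Eu (k+1) → ℝ := fun x => φ ‖x‖
    have hη' : ∀ x, HasFDerivAt η (-(χ ‖x‖) • innerSL ℝ x) x := by
      intro x
      rcases eq_or_ne x 0 with rfl | hx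
      · have : η =ᶠ[nhds 0] fun _ => φ 0 := by
          filter_upwards [ball_mem_nhds (0 : Eu (k+1)) hε] with y hy
          exact hφε _ (by simpa using hy)
        simpa using (hasFDerivAt_const (φ 0) (0 : Eu (k+1))).congr_of_eventuallyEq this
      · have hx' : ‖x‖ ≠ 0 := norm_ne_zero_iff.2 hx
        have h1 := (hasStrictFDerivAt_norm_sq x).hasFDerivAt.sqrt (by positivity)
        simp only [Real.sqrt_sq (norm_nonneg _)] at h1
        have h2 := (hφ' ‖x‖).comp_hasFDerivAt x h1
        refine h2.congr_fderiv ?_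
        ext v
        simp only [← hχ' ‖x‖, FunLike.coe_smul, Pi.smul_apply, smul_eq_mul, nsmul_eq_mul]
        simp
        field_simp
    have hηc : Continuous η := by fun_prop
    have hsupp : ∀ g : Eu (k+1) → ℝ, (∀ x, M ≤ ‖x‖ → g x = 0) → Continuous g → Integrable g := by
      intro g hg hgc
      refine hgc.integrable_of_hasCompactSupport ?_
      refine HasCompactSupport.intro (isCompact_closedBall 0 M) ?_
      intro x hx
      exact hg x (by simpa using (not_le.1 (by simpa using hx)).le)
    have hFd : ∀ x, DifferentiableAt ℝ F x := fun x => (hF.differentiable (by simp)) x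
    have hfdc : Continuous (fderiv ℝ F) := hF.continuous_fderiv (by simp)
    have hFj : ∀ j x, fderiv ℝ (fun y => F y j) x = (EuclideanSpace.proj j).comp (fderiv ℝ F x) := by
      intro j x
      exact ((EuclideanSpace.proj (𝕜 := ℝ) j).hasFDerivAt.comp x (hFd x).hasFDerivAt).fderiv
    have hηj : ∀ (j : Fin (k+1)) x, fderiv ℝ η x (EuclideanSpace.single j 1) = - (χ ‖x‖ * x j) := by
      intro j x
      rw [(hη' x).fderiv]
      simp [EuclideanSpace.inner_single_right]
    have ibp : ∀ j : Fin (k+1), ∫ x, η x * fderiv ℝ F x (EuclideanSpace.single j 1) j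
        = ∫ x, χ ‖x‖ * x j * F x j := by
      intro j
      have := integral_mul_fderiv_eq_neg_fderiv_mul_of_integrable (μ := (volume : Measure (Eu (k+1))))
        (f := η) (g := fun y => F y j) (v := EuclideanSpace.single j 1) ?_ ?_ ?_ ?_ ?_
      · simp only [hFj, hηj] at this
        simp only [neg_mul, integral_neg, neg_neg] at this
        exact this
      · simp only [hηj]
        refine hsupp _ (fun x hx => by simp [hχM _ hx]) (by fun_prop)
      · simp only [hFj]
        refine hsupp _ (fun x hx => by simp [η, hφM _ hx]) ?_
        simp only [ContinuousLinearMap.comp_apply]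
        fun_prop
      · refine hsupp _ (fun x hx => by simp [η, hφM _ hx]) (by fun_prop)
      · intro x _; exact (hη' x).differentiableAt
      · intro x _
        exact ((EuclideanSpace.proj (𝕜 := ℝ) j).hasFDerivAt.comp x (hFd x).hasFDerivAt).differentiableAt
    have hI1 : Integrable (fun x => η x * vdiv F x) :=
      hsupp _ (fun x hx => by simp [η, hφM _ hx]) (by fun_prop)
    have hI2 : Integrable (fun x => χ ‖x‖ * ⟪F x, x⟫) :=
      hsupp _ (fun x hx => by simp [hχM _ hx]) (by fun_prop)
    have tot : ∫ x, η x * vdiv F x = ∫ x, χ ‖x‖ * ⟪F x, x⟫ := by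
      have e1 : ∀ x, η x * vdiv F x = ∑ j, η x * fderiv ℝ F x (EuclideanSpace.single j 1) j := by
        intro x; rw [vdiv, Finset.mul_sum]
      have e2 : ∀ x, χ ‖x‖ * ⟪F x, x⟫ = ∑ j, χ ‖x‖ * x j * F x j := by
        intro x
        rw [PiLp.inner_apply, Finset.mul_sum]
        refine Finset.sum_congr rfl fun j _ => ?_
        simp [mul_assoc]
      simp only [e1, e2]
      rw [integral_finsetSum, integral_finsetSum]
      · exact Finset.sum_congr rfl fun j _ => ibp j
      · intro j _
        exact hsupp _ (fun x hx => by simp [hχM _ hx]) (by fun_prop)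
      · intro j _
        exact hsupp _ (fun x hx => by simp [η, hφM _ hx]) (by fun_prop)
    rw [polar_int k _ hI1, polar_int k _ hI2] at tot
    have L : ∫ r in Set.Ioi (0:ℝ), r ^ k * ∫ θ : sphere (0 : Eu (k+1)) 1,
        η (r • (θ : Eu (k+1))) * vdiv F (r • (θ : Eu (k+1))) ∂(volume : Measure (Eu (k+1))).toSphere
        = ∫ r, ψ r * A r := by
      have h1 : ∀ r ∈ Set.Ioi (0:ℝ), r ^ k * ∫ θ : sphere (0 : Eu (k+1)) 1,
        η (r • (θ : Eu (k+1))) * vdiv F (r • (θ : Eu (k+1))) ∂(volume : Measure (Eu (k+1))).toSphere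
        = φ r * (r ^ k * d r) := by
        intro r hr
        have : ∀ θ : sphere (0 : Eu (k+1)) 1, η (r • (θ : Eu (k+1))) = φ r := by
          intro θ; simp [η, norm_smul, abs_of_pos hr.out]
        simp only [this]
        rw [integral_const_mul]
        simp only [d]; ring
      rw [setIntegral_congr_fun measurableSet_Ioi h1]
      have h2 : ∫ r in Set.Ioi (0:ℝ), φ r * (r ^ k * d r) = ∫ r in (0:ℝ)..M, φ r * (r ^ k * d r) := by
        rw [intervalIntegral.integral_of_le hM.le]
        refine (setIntegral_eq_of_subset_of_forall_sdiff_eq_zero measurableSet_Ioi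
          Set.Ioc_subset_Ioi_self ?_)
        rintro r ⟨hr1, hr2⟩
        have : M ≤ r := by
          by_contra h
          exact hr2 ⟨hr1, (not_le.1 h).le⟩
        simp [hφM r this]
      have h3 : ∫ r, ψ r * A r = ∫ r in (0:ℝ)..M, ψ r * A r := by
        rw [intervalIntegral.integral_of_le hM.le]
        refine (setIntegral_eq_integral_of_forall_compl_eq_zero ?_).symm
        intro r hr
        by_cases h0 : 0 < r
        · have : M ≤ r := by
            by_contra h
            exact hr ⟨h0, (not_le.1 h).le⟩
          simp [hψM r this]
        · simp [hψε r (by linarith)]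
      rw [h2, h3, intervalIntegral.integral_mul_deriv_eq_deriv_mul (fun r _ => hφ' r) (fun r _ => hA' r)
        ((by fun_prop : Continuous fun r => -ψ r).intervalIntegrable _ _)
        ((by fun_prop : Continuous fun r => r ^ k * d r).intervalIntegrable _ _)]
      simp [hφM M le_rfl, A]
    have Rr : ∫ r in Set.Ioi (0:ℝ), r ^ k * ∫ θ : sphere (0 : Eu (k+1)) 1,
        χ ‖r • (θ : Eu (k+1))‖ * ⟪F (r • (θ : Eu (k+1))), r • (θ : Eu (k+1))⟫
          ∂(volume : Measure (Eu (k+1))).toSphere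
        = ∫ r, ψ r * B r := by
      have h1 : ∀ r ∈ Set.Ioi (0:ℝ), r ^ k * ∫ θ : sphere (0 : Eu (k+1)) 1,
        χ ‖r • (θ : Eu (k+1))‖ * ⟪F (r • (θ : Eu (k+1))), r • (θ : Eu (k+1))⟫
          ∂(volume : Measure (Eu (k+1))).toSphere = ψ r * B r := by
        intro r hr
        have : ∀ θ : sphere (0 : Eu (k+1)) 1, χ ‖r • (θ : Eu (k+1))‖ *
            ⟪F (r • (θ : Eu (k+1))), r • (θ : Eu (k+1))⟫ = ψ r * ⟪F (r • (θ : Eu (k+1))), (θ : Eu (k+1))⟫ := by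
          intro θ
          rw [inner_smul_right, ← mul_assoc, ← hχ' r]
          simp [norm_smul, abs_of_pos hr.out]
        simp only [this]
        rw [integral_const_mul]
        simp only [B, b]; ring
      rw [setIntegral_congr_fun measurableSet_Ioi h1]
      refine (setIntegral_eq_integral_of_forall_compl_eq_zero ?_)
      intro r hr
      have : r ≤ 0 := by simpa using hr
      simp [hψε r (by linarith)]
    rw [L, Rr] at tot
    have hi : ∀ C : ℝ → ℝ, Continuous C → Integrable (fun r => ψ r * C r) := fun C hC =>
      (hψcont.mul hC).integrable_of_hasCompactSupport hψc.mul_right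
    simp only [smul_eq_mul, mul_sub]
    rw [integral_sub (hi A hAc) (hi B hBc), tot, sub_self]
  have hae := isOpen_Ioi.ae_eq_zero_of_integral_contDiff_smul_eq_zero
    (μ := (volume : Measure ℝ)) (f := fun r => A r - B r) (U := Set.Ioi 0)
    ((hAc.sub hBc).locallyIntegrable.locallyIntegrableOn _) key
  have heq : Set.EqOn A B (Set.Ioi 0) := by
    refine Measure.eqOn_open_of_ae_eq (μ := (volume : Measure ℝ)) ?_ isOpen_Ioi
      hAc.continuousOn hBc.continuousOn
    rw [EventuallyEq, ae_restrict_iff' measurableSet_Ioi]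
    filter_upwards [hae] with r hr hr0
    linarith [hr hr0]
  rw [hAeq R hR, heq hR]

theorem div_haus (n : ℕ) : ∃ c : ℝ, ∀ F : Eu n → Eu n, ContDiff ℝ 1 F → ∀ R : ℝ, 0 < R →
    ∫ x in ball (0 : Eu n) R, vdiv F x =
      c * ∫ x in sphere (0 : Eu n) R, ⟪F x, ‖x‖⁻¹ • x⟫ ∂μH[(n : ℝ) - 1] := by
  rcases n with _ | k
  · refine ⟨0, fun F hF R hR => ?_⟩
    simp [vdiv]
  · refine ⟨(volume : Measure (Eu (k+1))).toSphere.real Set.univ /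
        (μH[(k : ℝ)] : Measure (Eu (k+1))).real (sphere 0 1), fun F hF R hR => ?_⟩
    · have h := sphere_int k R hR (fun x => ⟪F x, R⁻¹ • x⟫) (by have := hF.continuous; fun_prop)
      have h2 : ∫ x in sphere (0 : Eu (k+1)) R, ⟪F x, ‖x‖⁻¹ • x⟫ ∂μH[((k + 1 : ℕ) : ℝ) - 1]
        = ∫ x in sphere (0 : Eu (k+1)) R, ⟪F x, R⁻¹ • x⟫ ∂μH[(k : ℝ)] := by
        have : ((k + 1 : ℕ) : ℝ) - 1 = k := by push_cast; ring
        rw [this]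
        refine setIntegral_congr_fun isClosed_sphere.measurableSet fun x hx => ?_
        rw [mem_sphere_zero_iff_norm] at hx
        simp only [hx]
      rw [h2, vdiv_ball_aux k F hF R hR, ← h]
      simp [smul_smul, hR.ne']

def pj {N : ℕ} (v : Eu N → ℝ) (j : Fin N) (y : Eu N) : ℝ :=
  fderiv ℝ v y (EuclideanSpace.single j 1)

def wf {N : ℕ} (v : Eu N → ℝ) (y : Eu N) : ℝ := Real.sqrt (1 + ∑ j, pj v j y ^ 2)

def Vj {N : ℕ} (v : Eu N → ℝ) (j : Fin N) (y : Eu N) : ℝ := (wf v y)⁻¹ * pj v j y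

theorem pj_contDiff {N : ℕ} {v : Eu N → ℝ} (hv : ContDiff ℝ 2 v) (j : Fin N) :
    ContDiff ℝ 1 (pj v j) := by
  have h : ContDiff ℝ 1 (fderiv ℝ v) := hv.fderiv_right (by norm_num)
  exact h.clm_apply contDiff_const

theorem wf_arg_pos {N : ℕ} (v : Eu N → ℝ) (y : Eu N) : 0 < 1 + ∑ j, pj v j y ^ 2 := by
  have : 0 ≤ ∑ j, pj v j y ^ 2 := Finset.sum_nonneg fun j _ => sq_nonneg _
  linarith

theorem wf_pos {N : ℕ} (v : Eu N → ℝ) (y : Eu N) : 0 < wf v y :=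
  Real.sqrt_pos.2 (wf_arg_pos v y)

theorem wf_contDiff {N : ℕ} {v : Eu N → ℝ} (hv : ContDiff ℝ 2 v) : ContDiff ℝ 1 (wf v) := by
  refine ContDiff.sqrt ?_ (fun y => (wf_arg_pos v y).ne')
  have := fun j => pj_contDiff hv j
  fun_prop

theorem Vj_contDiff {N : ℕ} {v : Eu N → ℝ} (hv : ContDiff ℝ 2 v) (j : Fin N) :
    ContDiff ℝ 1 (Vj v j) :=
  ((wf_contDiff hv).inv (fun y => (wf_pos v y).ne')).mul (pj_contDiff hv j)

theorem gradient_coord {N : ℕ} (v : Eu N → ℝ) (y : Eu N) (j : Fin N) :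
    gradient v y j = pj v j y := by
  have h : ⟪gradient v y, EuclideanSpace.single j (1:ℝ)⟫ = pj v j y := by
    simp [gradient, pj]
  rw [← h, EuclideanSpace.inner_single_right]
  simp

theorem norm_gradient_sq {N : ℕ} (v : Eu N → ℝ) (y : Eu N) :
    ‖gradient v y‖ ^ 2 = ∑ j, pj v j y ^ 2 := by
  rw [EuclideanSpace.norm_sq_eq]
  simp [gradient_coord]

theorem sqrt_gradient {N : ℕ} (v : Eu N → ℝ) (y : Eu N) :
    Real.sqrt (1 + ‖gradient v y‖ ^ 2) = wf v y := by
  rw [norm_gradient_sq]; rfl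

theorem pj_symm {N : ℕ} {v : Eu N → ℝ} (hv : ContDiff ℝ 2 v) (j l : Fin N) (y : Eu N) :
    fderiv ℝ (pj v j) y (EuclideanSpace.single l 1) =
    fderiv ℝ (pj v l) y (EuclideanSpace.single j 1) := by
  have h : ContDiff ℝ 1 (fderiv ℝ v) := hv.fderiv_right (by norm_num)
  have hd : DifferentiableAt ℝ (fderiv ℝ v) y := h.differentiable (by simp) y
  have e : ∀ j l : Fin N, fderiv ℝ (pj v j) y (EuclideanSpace.single l 1) =
      fderiv ℝ (fderiv ℝ v) y (EuclideanSpace.single l 1) (EuclideanSpace.single j 1) := by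
    intro j l
    have : HasFDerivAt (pj v j) _ y := hd.hasFDerivAt.clm_apply
      (hasFDerivAt_const (EuclideanSpace.single j (1:ℝ)) y)
    rw [this.fderiv]
    simp
  rw [e, e]
  exact (hv.contDiffAt.isSymmSndFDerivAt (by simp)) _ _

theorem fderiv_wf {N : ℕ} {v : Eu N → ℝ} (hv : ContDiff ℝ 2 v) (y e : Eu N) :
    fderiv ℝ (wf v) y e = ∑ j, Vj v j y * fderiv ℝ (pj v j) y e := by
  have hp : ∀ j, HasFDerivAt (pj v j) (fderiv ℝ (pj v j) y) y := fun j =>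
    ((pj_contDiff hv j).differentiable (by simp) y).hasFDerivAt
  have h : HasFDerivAt (wf v) _ y :=
    ((HasFDerivAt.fun_sum (u := Finset.univ) fun j _ => (hp j).pow 2).const_add 1).sqrt
      (wf_arg_pos v y).ne'
  rw [h.fderiv]
  have hw := (wf_pos v y).ne'
  rw [show Real.sqrt (1 + ∑ j, pj v j y ^ 2) = wf v y from rfl]
  simp only [FunLike.coe_smul, Pi.smul_apply, FunLike.coe_sum, Finset.sum_apply, smul_eq_mul,
    Finset.mul_sum]
  refine Finset.sum_congr rfl fun j _ => ?_
  simp [Vj]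
  field_simp

theorem vdiv_field {N : ℕ} {v : Eu N → ℝ} (hv : ContDiff ℝ 2 v) (y : Eu N) :
    vdiv (fun y => (Real.sqrt (1 + ‖gradient v y‖ ^ 2))⁻¹ • gradient v y) y
      = ∑ j, fderiv ℝ (Vj v j) y (EuclideanSpace.single j 1) := by
  have hF : (fun y => (Real.sqrt (1 + ‖gradient v y‖ ^ 2))⁻¹ • gradient v y)
      = fun y => WithLp.toLp 2 (fun j => Vj v j y) := by
    funext y
    ext j
    simp [sqrt_gradient, gradient_coord, Vj]
  rw [hF]
  have hc : ContDiff ℝ 1 (fun y => (WithLp.toLp 2 (fun j => Vj v j y) : Eu N)) := by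
    rw [contDiff_euclidean]
    intro j
    exact Vj_contDiff hv j
  unfold vdiv
  refine Finset.sum_congr rfl fun j _ => ?_
  have h1 := ((EuclideanSpace.proj (𝕜 := ℝ) j).hasFDerivAt.comp y
    (hc.differentiable (by simp) y).hasFDerivAt).fderiv
  have h2 : (⇑(EuclideanSpace.proj (𝕜 := ℝ) j) ∘ fun y => (WithLp.toLp 2 (fun j => Vj v j y) : Eu N))
      = Vj v j := by funext y; simp
  rw [h2] at h1
  rw [h1]
  simp

/-- pointwise identity -/
theorem comp_identity {n : ℕ} {v : Eu (n+1) → ℝ} (hv : ContDiff ℝ 2 v) (y : Eu (n+1)) :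
    fderiv ℝ (fun y => wf v y - pj v (Fin.last n) y * Vj v (Fin.last n) y - 1) y
        (EuclideanSpace.single (Fin.last n) 1)
    = (∑ j : Fin n, fderiv ℝ (fun y => pj v (Fin.last n) y * Vj v j.castSucc y) y
        (EuclideanSpace.single j.castSucc 1))
      - pj v (Fin.last n) y * ∑ j, fderiv ℝ (Vj v j) y (EuclideanSpace.single j 1) := by
  have hp : ∀ j, DifferentiableAt ℝ (pj v j) y := fun j =>
    ((pj_contDiff hv j).differentiable (by simp) y)
  have hV : ∀ j, DifferentiableAt ℝ (Vj v j) y := fun j =>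
    ((Vj_contDiff hv j).differentiable (by simp) y)
  have hw : DifferentiableAt ℝ (wf v) y := (wf_contDiff hv).differentiable (by simp) y
  have hmul : ∀ (j l : Fin (n+1)) e, fderiv ℝ (fun y => pj v j y * Vj v l y) y e
      = pj v j y * fderiv ℝ (Vj v l) y e + Vj v l y * fderiv ℝ (pj v j) y e := by
    intro j l e
    rw [fderiv_fun_mul (hp j) (hV l)]
    simp
  have h1 : fderiv ℝ (fun y => wf v y - pj v (Fin.last n) y * Vj v (Fin.last n) y - 1) y
        (EuclideanSpace.single (Fin.last n) 1) = fderiv ℝ (wf v) y (EuclideanSpace.single (Fin.last n) 1)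
        - fderiv ℝ (fun y => pj v (Fin.last n) y * Vj v (Fin.last n) y) y
          (EuclideanSpace.single (Fin.last n) 1) := by
    rw [fderiv_sub_const, fderiv_fun_sub hw ((hp _).fun_mul (hV _))]
    simp
  rw [h1, fderiv_wf hv, Fin.sum_univ_castSucc, Fin.sum_univ_castSucc]
  simp only [hmul]
  rw [Finset.sum_add_distrib, ← Finset.mul_sum]
  have hs : ∀ j : Fin n, fderiv ℝ (pj v (Fin.last n)) y (EuclideanSpace.single j.castSucc 1)
    = fderiv ℝ (pj v j.castSucc) y (EuclideanSpace.single (Fin.last n) 1) := fun j =>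
    pj_symm hv _ _ _
  simp only [hs]
  ring

def embL (n : ℕ) : Eu n →L[ℝ] Eu (n+1) :=
  LinearMap.toContinuousLinearMap
    { toFun := fun x => emb x 0
      map_add' := by
        intro x y
        ext i
        refine Fin.lastCases ?_ (fun j => ?_) i <;> simp [emb]
      map_smul' := by
        intro c x
        ext i
        refine Fin.lastCases ?_ (fun j => ?_) i <;> simp [emb] }

theorem emb_eq {n : ℕ} (x : Eu n) (t : ℝ) :
    emb x t = embL n x + t • EuclideanSpace.single (Fin.last n) 1 := by
  ext i
  refine Fin.lastCases ?_ (fun j => ?_) i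
  · simp [emb, embL]
  · simp [emb, embL, Fin.ext_iff, j.2.ne]

theorem embL_single {n : ℕ} (j : Fin n) :
    embL n (EuclideanSpace.single j 1) = EuclideanSpace.single j.castSucc 1 := by
  ext i
  refine Fin.lastCases ?_ (fun l => ?_) i
  · simp [emb, embL, Fin.ext_iff, j.2.ne']
  · simp [emb, embL]

theorem emb_hasFDerivAt {n : ℕ} (x : Eu n) (t : ℝ) : HasFDerivAt (fun y => emb y t) (embL n) x := by
  simp only [emb_eq]
  exact (embL n).hasFDerivAt.add_const _

theorem emb_hasDerivAt {n : ℕ} (x : Eu n) (t : ℝ) :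
    HasDerivAt (fun s => emb x s) (EuclideanSpace.single (Fin.last n) 1) t := by
  simp only [emb_eq]
  simpa using ((hasDerivAt_id t).smul_const
    (EuclideanSpace.single (Fin.last n) (1:ℝ))).const_add (embL n x)

theorem emb_continuous {n : ℕ} : Continuous (fun p : ℝ × Eu n => emb p.2 p.1) := by
  simp only [emb_eq]; fun_prop

theorem emb_contDiff {n : ℕ} (t : ℝ) : ContDiff ℝ 1 (fun y : Eu n => emb y t) := by
  simp only [emb_eq]; fun_prop

theorem slice_pj {n : ℕ} {v : Eu (n+1) → ℝ} (hv : Differentiable ℝ v) (x : Eu n) (t : ℝ) (j : Fin n) :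
    pj (fun y => v (emb y t)) j x = pj v j.castSucc (emb x t) := by
  unfold pj
  have h := ((hv (emb x t)).hasFDerivAt.comp x (emb_hasFDerivAt x t)).fderiv
  change fderiv ℝ (fun y => v (emb y t)) x = _ at h
  rw [h, ContinuousLinearMap.comp_apply, embL_single]

def Phi {n m : ℕ} (Ht : (Fin m → ℝ) → ℝ) (u : Fin m → Eu (n+1) → ℝ) (y : Eu (n+1)) : ℝ :=
  (∑ i, (wf (u i) y - pj (u i) (Fin.last n) y * Vj (u i) (Fin.last n) y - 1)) - Ht (fun j => u j y)

theorem mc_eq {n m : ℕ} (Ht : (Fin m → ℝ) → ℝ) (u : Fin m → Eu (n+1) → ℝ)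
    (hu : ∀ i, ContDiff ℝ 2 (u i)) (x : Eu n) (t : ℝ) :
    mcIntegrand Ht u x t = Phi Ht u (emb x t) := by
  unfold mcIntegrand Phi
  congr 1
  refine Finset.sum_congr rfl fun i _ => ?_
  rw [sqrt_gradient, norm_gradient_sq]
  simp only [slice_pj ((hu i).differentiable (by simp))]
  have hw := wf_pos (u i) (emb x t)
  have hsq : wf (u i) (emb x t) ^ 2 = 1 + ((∑ j : Fin n, pj (u i) j.castSucc (emb x t) ^ 2)
      + pj (u i) (Fin.last n) (emb x t) ^ 2) := by
    rw [← Fin.sum_univ_castSucc (fun j => pj (u i) j (emb x t) ^ 2)]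
    exact Real.sq_sqrt (wf_arg_pos _ _).le
  unfold Vj
  field_simp
  linear_combination -hsq

theorem Phi_contDiff {n m : ℕ} (Ht : (Fin m → ℝ) → ℝ) (hHt : ContDiff ℝ 2 Ht)
    (u : Fin m → Eu (n+1) → ℝ) (hu : ∀ i, ContDiff ℝ 2 (u i)) : ContDiff ℝ 1 (Phi Ht u) := by
  have h1 := fun i => wf_contDiff (hu i)
  have h2 := fun i => pj_contDiff (hu i) (Fin.last n)
  have h3 := fun i => Vj_contDiff (hu i) (Fin.last n)
  have h4 : ContDiff ℝ 1 (fun y => Ht (fun j => u j y)) :=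
    (hHt.of_le (by norm_num)).comp (contDiff_pi.2 fun j => (hu j).of_le (by norm_num))
  exact (ContDiff.sum (s := Finset.univ) fun i _ => (((h1 i).sub ((h2 i).mul (h3 i))).sub contDiff_const)).sub h4

def Fld {n m : ℕ} (u : Fin m → Eu (n+1) → ℝ) (t : ℝ) (x : Eu n) : Eu n :=
  WithLp.toLp 2 (fun j => ∑ i, pj (u i) (Fin.last n) (emb x t) * Vj (u i) j.castSucc (emb x t))

theorem Fld_contDiff {n m : ℕ} (u : Fin m → Eu (n+1) → ℝ) (hu : ∀ i, ContDiff ℝ 2 (u i)) (t : ℝ) :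
    ContDiff ℝ 1 (Fld u t) := by
  rw [contDiff_euclidean]
  intro j
  have h0 := emb_contDiff (n := n) t
  have h2 := fun i => (pj_contDiff (hu i) (Fin.last n)).comp h0
  have h3 := fun i => (Vj_contDiff (hu i) j.castSucc).comp h0
  exact ContDiff.sum (s := Finset.univ) fun i _ => (h2 i).mul (h3 i)

theorem vdiv_Fld {n m : ℕ} (u : Fin m → Eu (n+1) → ℝ) (hu : ∀ i, ContDiff ℝ 2 (u i)) (t : ℝ)
    (x : Eu n) : vdiv (Fld u t) x = ∑ i, ∑ j : Fin n,
      fderiv ℝ (fun y => pj (u i) (Fin.last n) y * Vj (u i) j.castSucc y) (emb x t)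
        (EuclideanSpace.single j.castSucc 1) := by
  rw [Finset.sum_comm]
  unfold vdiv
  refine Finset.sum_congr rfl fun j _ => ?_
  have h1 := ((EuclideanSpace.proj (𝕜 := ℝ) j).hasFDerivAt.comp x
    ((Fld_contDiff u hu t).differentiable (by simp) x).hasFDerivAt).fderiv
  have hd : ∀ i, DifferentiableAt ℝ (fun y => pj (u i) (Fin.last n) y * Vj (u i) j.castSucc y) (emb x t) :=
    fun i => ((pj_contDiff (hu i) _).mul (Vj_contDiff (hu i) _)).differentiable (by simp) _
  have h2 : HasFDerivAt (⇑(EuclideanSpace.proj (𝕜 := ℝ) j) ∘ Fld u t)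
      (∑ i, (fderiv ℝ (fun y => pj (u i) (Fin.last n) y * Vj (u i) j.castSucc y) (emb x t)).comp (embL n)) x := by
    exact HasFDerivAt.fun_sum (u := Finset.univ) fun i _ => (hd i).hasFDerivAt.comp x (emb_hasFDerivAt x t)
  rw [h2.fderiv] at h1
  have h3 := congrArg (fun L => L (EuclideanSpace.single j 1)) h1
  simp only [FunLike.coe_sum, Finset.sum_apply, ContinuousLinearMap.comp_apply, embL_single] at h3
  rw [h3]
  simp

theorem Phi_deriv {n m : ℕ} (H : Fin m → (Fin m → ℝ) → ℝ)
    (Ht : (Fin m → ℝ) → ℝ) (hHt : ContDiff ℝ 2 Ht)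
    (hHtgrad : ∀ i y, fderiv ℝ Ht y (Pi.single i 1) = H i y)
    (u : Fin m → EuclideanSpace ℝ (Fin (n + 1)) → ℝ)
    (hu : ∀ i, ContDiff ℝ 2 (u i))
    (hsol : ∀ i x, -vdiv (fun y =>
        (Real.sqrt (1 + ‖gradient (u i) y‖ ^ 2))⁻¹ • gradient (u i) y) x
        = H i (fun j => u j x)) (x : Eu n) (t : ℝ) :
    fderiv ℝ (Phi Ht u) (emb x t) (EuclideanSpace.single (Fin.last n) 1) = vdiv (Fld u t) x := by
  have hq : ∀ i, DifferentiableAt ℝ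
      (fun y => wf (u i) y - pj (u i) (Fin.last n) y * Vj (u i) (Fin.last n) y - 1) (emb x t) :=
    fun i => (((wf_contDiff (hu i)).sub ((pj_contDiff (hu i) _).mul
      (Vj_contDiff (hu i) _))).sub contDiff_const).differentiable (by simp) _
  have hU : HasFDerivAt (fun y j => u j y) (ContinuousLinearMap.pi fun j => fderiv ℝ (u j) (emb x t))
      (emb x t) := hasFDerivAt_pi.2 fun j => ((hu j).differentiable (by simp) _).hasFDerivAt
  have hH := ((hHt.differentiable (by simp)) (fun j => u j (emb x t))).hasFDerivAt.comp (emb x t) hU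
  have hPhi : HasFDerivAt (Phi Ht u) _ (emb x t) :=
    (HasFDerivAt.fun_sum (u := Finset.univ) fun i _ => (hq i).hasFDerivAt).sub hH
  rw [hPhi.fderiv, vdiv_Fld u hu]
  simp only [FunLike.coe_sub, Pi.sub_apply, FunLike.coe_sum, Finset.sum_apply,
    ContinuousLinearMap.comp_apply, comp_identity (hu _)]
  have hv : (ContinuousLinearMap.pi fun j => fderiv ℝ (u j) (emb x t))
      (EuclideanSpace.single (Fin.last n) (1:ℝ)) = ∑ i, pj (u i) (Fin.last n) (emb x t) • Pi.single i (1:ℝ) := by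
    ext i
    simp [Finset.sum_apply, Pi.single_apply, pj]
  rw [hv, map_sum]
  simp only [map_smul, hHtgrad, smul_eq_mul]
  rw [Finset.sum_sub_distrib, sub_sub, sub_eq_self, ← Finset.sum_add_distrib]
  refine Finset.sum_eq_zero fun i _ => ?_
  rw [← hsol i (emb x t), vdiv_field (hu i)]
  ring

/-- **Hamiltonian identity for the prescribed mean curvature system**
`-div(∇uᵢ/√(1+|∇uᵢ|²)) = Hᵢ(u)` on `ℝ^{n+1}`: under the stated integrability,
differentiation-under-the-integral and vanishing-boundary-term assumptions,
`∫_{ℝⁿ} ( ∑ᵢ (1 + |∇_{x'}uᵢ|² - √(1+|∇uᵢ|²))/√(1+|∇uᵢ|²) - H̃(u) ) dx'`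
is independent of `x_n`. -/
theorem hamiltonian_identity_mean_curvature
    (n m : ℕ) (hm : 1 ≤ m)
    (H : Fin m → (Fin m → ℝ) → ℝ) (hH : ∀ i, ContDiff ℝ 1 (H i))
    (Ht : (Fin m → ℝ) → ℝ) (hHt : ContDiff ℝ 2 Ht)
    (hHtgrad : ∀ i y, fderiv ℝ Ht y (Pi.single i 1) = H i y)
    (u : Fin m → EuclideanSpace ℝ (Fin (n + 1)) → ℝ)
    (hu : ∀ i, ContDiff ℝ 2 (u i))
    (hsol : ∀ i x, -vdiv (fun y =>
        (Real.sqrt (1 + ‖gradient (u i) y‖ ^ 2))⁻¹ • gradient (u i) y) x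
        = H i (fun j => u j x))
    -- (i) integrability of the integrand on every horizontal slice
    (hint : ∀ t : ℝ, Integrable (fun x' : EuclideanSpace ℝ (Fin n) => mcIntegrand Ht u x' t))
    -- (ii) differentiation under the integral sign is justified on every ball
    (hdiff : ∀ R : ℝ, 0 < R → ∀ t : ℝ,
      HasDerivAt (fun s : ℝ => ∫ x' in ball (0 : EuclideanSpace ℝ (Fin n)) R,
          mcIntegrand Ht u x' s)
        (∫ x' in ball (0 : EuclideanSpace ℝ (Fin n)) R,
          deriv (fun s : ℝ => mcIntegrand Ht u x' s) t) t)
    -- (iii) the boundary terms vanish along a sequence of radii tending to infinity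
    (hbdry : ∀ t : ℝ, ∃ R : ℕ → ℝ, Tendsto R atTop atTop ∧
      Tendsto (fun k => ∫ s in (0 : ℝ)..t,
          ∫ x' in sphere (0 : EuclideanSpace ℝ (Fin n)) (R k),
            ∑ i, ⟪gradient (fun y => u i (emb y s)) x', ‖x'‖⁻¹ • x'⟫
              * fderiv ℝ (u i) (emb x' s) (EuclideanSpace.single (Fin.last n) 1)
              / Real.sqrt (1 + ‖gradient (u i) (emb x' s)‖ ^ 2)
            ∂μH[(n : ℝ) - 1]) atTop (nhds 0)) :
    ∀ t : ℝ, (∫ x' : EuclideanSpace ℝ (Fin n), mcIntegrand Ht u x' t)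
      = ∫ x' : EuclideanSpace ℝ (Fin n), mcIntegrand Ht u x' 0 := by
  obtain ⟨c, hc⟩ := div_haus n
  intro t
  have hPhi := Phi_contDiff Ht hHt u hu
  have hder : ∀ (x' : EuclideanSpace ℝ (Fin n)) (s : ℝ),
      deriv (fun s : ℝ => mcIntegrand Ht u x' s) s = vdiv (Fld u s) x' := by
    intro x' s
    simp only [mc_eq Ht u hu]
    rw [← Phi_deriv H Ht hHt hHtgrad u hu hsol]
    exact ((hPhi.differentiable (by simp) _).hasFDerivAt.comp_hasDerivAt s
      (emb_hasDerivAt x' s)).deriv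
  have hbd : ∀ (R : ℝ), 0 < R → ∀ s, ∫ x' in ball (0 : EuclideanSpace ℝ (Fin n)) R,
        deriv (fun s : ℝ => mcIntegrand Ht u x' s) s = c *
      ∫ x' in sphere (0 : EuclideanSpace ℝ (Fin n)) R,
            ∑ i, ⟪gradient (fun y => u i (emb y s)) x', ‖x'‖⁻¹ • x'⟫
              * fderiv ℝ (u i) (emb x' s) (EuclideanSpace.single (Fin.last n) 1)
              / Real.sqrt (1 + ‖gradient (u i) (emb x' s)‖ ^ 2)
            ∂μH[(n : ℝ) - 1] := by
    intro R hR s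
    simp only [hder]
    rw [hc _ (Fld_contDiff u hu s) R hR]
    congr 2
    funext x'
    have hF : Fld u s x' = ∑ i, (fderiv ℝ (u i) (emb x' s) (EuclideanSpace.single (Fin.last n) 1)
              / Real.sqrt (1 + ‖gradient (u i) (emb x' s)‖ ^ 2)) •
              gradient (fun y => u i (emb y s)) x' := by
      ext j
      simp only [Fld, WithLp.ofLp_sum, WithLp.ofLp_smul, Finset.sum_apply, Pi.smul_apply,
        gradient_coord, sqrt_gradient, slice_pj ((hu _).differentiable (by simp)), Vj, smul_eq_mul]
      refine Finset.sum_congr rfl fun i _ => ?_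
      rw [pj]
      ring
    rw [hF, sum_inner]
    refine Finset.sum_congr rfl fun i _ => ?_
    rw [real_inner_smul_left]
    ring
  have hcont : ∀ R : ℝ, 0 < R → Continuous (fun s => ∫ x' in ball (0 : EuclideanSpace ℝ (Fin n)) R,
        deriv (fun s : ℝ => mcIntegrand Ht u x' s) s) := by
    intro R hR
    have h1 : ∀ s, ∫ x' in ball (0 : EuclideanSpace ℝ (Fin n)) R,
        deriv (fun s : ℝ => mcIntegrand Ht u x' s) s =
        ∫ x' in closedBall (0 : EuclideanSpace ℝ (Fin n)) R,
          fderiv ℝ (Phi Ht u) (emb x' s) (EuclideanSpace.single (Fin.last n) 1) := by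
      intro s
      simp only [hder, Phi_deriv H Ht hHt hHtgrad u hu hsol]
      refine setIntegral_congr_set ?_
      refine ball_subset_closedBall.eventuallyLE.antisymm ?_
      rw [ae_le_set, closedBall_sdiff_ball]
      exact Measure.addHaar_sphere_of_ne_zero _ _ hR.ne'
    simp only [h1]
    refine continuous_parametric_integral_of_continuous ?_ (isCompact_closedBall _ _)
    have h2 : Continuous (fderiv ℝ (Phi Ht u)) := hPhi.continuous_fderiv (by simp)
    exact (h2.comp (emb_continuous (n := n))).clm_apply continuous_const
  have hftc : ∀ R : ℝ, 0 < R → ∫ s in (0:ℝ)..t, ∫ x' in ball (0 : EuclideanSpace ℝ (Fin n)) R,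
        deriv (fun s : ℝ => mcIntegrand Ht u x' s) s
      = (∫ x' in ball (0 : EuclideanSpace ℝ (Fin n)) R, mcIntegrand Ht u x' t)
        - ∫ x' in ball (0 : EuclideanSpace ℝ (Fin n)) R, mcIntegrand Ht u x' 0 := by
    intro R hR
    exact intervalIntegral.integral_eq_sub_of_hasDerivAt (fun s _ => hdiff R hR s)
      ((hcont R hR).intervalIntegrable _ _)
  obtain ⟨R, hR, hlim⟩ := hbdry t
  have hl1 := ((aecover_ball (μ := volume) (x := (0 : EuclideanSpace ℝ (Fin n))) hR).integral_tendsto_of_countably_generated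
    (hint t)).sub ((aecover_ball (μ := volume) (x := (0 : EuclideanSpace ℝ (Fin n))) hR).integral_tendsto_of_countably_generated
    (hint 0))
  have hl2 := hlim.const_mul c
  rw [mul_zero] at hl2
  rw [← sub_eq_zero]
  refine tendsto_nhds_unique (hl1.congr' ?_) hl2
  filter_upwards [hR.eventually_gt_atTop 0] with k hk
  rw [← hftc (R k) hk, ← intervalIntegral.integral_const_mul]
  refine intervalIntegral.integral_congr fun s _ => ?_
  exact hbd (R k) hk s
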